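/- Let 1 ≤ p < ∞ and let n ≥ 2 be an integer. Let f be analytic on the unit disk 𝔻 with f ∈ B_p, let F(z) = ∫₀ᶻ f(w) dw be its primitive, and assume F ∈ H² with a.e. radial boundary values F*. Then there exists a function F̃ of class C¹ on {z ∈ ℂ : |z| > 1} such that: (a) for a.e. θ ∈ [0,2π], F̃(re^{iθ}) → F*(θ) as r → 1⁺; (b) F̃(z) = O(z^n) as z → ∞; (c) ∂̄F̃(z) = O(z^{n−2}) as z → ∞; and (d) ∫_{|z|>1} |∂̄F̃(z)|^p / (|z|^{np/2 − p + 2} − 1)² dA(z) < ∞. -/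

import Mathlib

open MeasureTheory Metric Complex Filter Set
open scoped ENNReal Real Topology

noncomputable section

/-- The Cauchy–Riemann (Wirtinger) operator `∂̄g = (1/2)(∂g/∂x + i ∂g/∂y)`. -/
def dbar (g : ℂ → ℂ) (z : ℂ) : ℂ :=
  (1 / 2 : ℂ) * (fderiv ℝ g z 1 + Complex.I * fderiv ℝ g z Complex.I)

/-- Membership in the Hardy space `H²`. -/
def MemH2 (F : ℂ → ℂ) : Prop :=
  ∃ M : ℝ, ∀ r ∈ Set.Ioo (0 : ℝ) 1,
    (∫ θ in (0 : ℝ)..(2 * Real.pi),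
      ‖F ((r : ℂ) * Complex.exp ((θ : ℂ) * Complex.I))‖ ^ 2) ≤ M

/-- `Fb` is the a.e. radial boundary value function of `F` (from inside). -/
def RadialLimitIn (F : ℂ → ℂ) (Fb : ℝ → ℂ) : Prop :=
  ∀ᵐ (θ : ℝ) ∂(volume.restrict (Set.Ioc (0 : ℝ) (2 * Real.pi))),
    Tendsto (fun r : ℝ => F ((r : ℂ) * Complex.exp ((θ : ℂ) * Complex.I)))
      (𝓝[<] 1) (𝓝 (Fb θ))

/-- `Fb` is the a.e. radial limit function of `G` from outside the circle. -/
def RadialLimitOut (G : ℂ → ℂ) (Fb : ℝ → ℂ) : Prop :=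
  ∀ᵐ (θ : ℝ) ∂(volume.restrict (Set.Ioc (0 : ℝ) (2 * Real.pi))),
    Tendsto (fun r : ℝ => G ((r : ℂ) * Complex.exp ((θ : ℂ) * Complex.I)))
      (𝓝[>] 1) (𝓝 (Fb θ))

/-- `g(z) = O(z^m)` as `z → ∞`. -/
def BigOPow (g : ℂ → ℂ) (m : ℕ) : Prop :=
  ∃ C R : ℝ, 0 < C ∧ 0 < R ∧ ∀ z : ℂ, R ≤ ‖z‖ → ‖g z‖ ≤ C * ‖z‖ ^ m

/-- Membership in the Besov space `B_p`, via the `n`-th derivative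
characterization. -/
def MemBesov (p : ℝ) (n : ℕ) (f : ℂ → ℂ) : Prop :=
  (∫⁻ z in ball (0 : ℂ) 1,
    ENNReal.ofReal (‖iteratedDeriv n f z‖ ^ p * (1 - ‖z‖ ^ 2) ^ ((n : ℝ) * p - 2))) < ⊤

/-!
Following Dynkin, extend `F` to an exterior point `z` by its Taylor polynomial of degree `n` at the
reflected point `z* = 1 / z̄`, evaluated at `z`. Under `∂̄` the sum telescopes to the single term
`F⁽ⁿ⁺¹⁾(z*) (z - z*)ⁿ / n! · ∂̄z*`, and the change of variables `z ↦ z*` carries the weighted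
integral over the exterior to the Besov integral of `f⁽ⁿ⁾ = F⁽ⁿ⁺¹⁾`.

For the boundary values, `|f⁽ⁿ⁾|ᵖ` has the sub-mean value property (for `p < 1` too, by the Jensen
formula), so Besov integrability over a disk of radius `(1 - |z|) / 2` around `z` gives
`F⁽ⁿ⁺¹⁾(z) = O((1 - |z|)⁻ⁿ)`. Integrating along radii, `F⁽ᵏ⁺¹⁾(z) = O((1 - |z|)⁻ᵏ⁻ˢ)` for `k ≤ n`
and every `s > 0`; with `s = 1/2` all Taylor terms of positive order at most `n` vanish at the
circle, and the extension has the same radial limits as `F`.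
-/

section SubmeanValue

variable {g : ℂ → ℂ} {u v : ℂ → ℝ} {c : ℂ} {R a p : ℝ}

lemma circleAverage_mono_codiscreteWithin (hR : R ≠ 0) (hu : CircleIntegrable u c R)
    (hv : CircleIntegrable v c R) (huv : u ≤ᶠ[codiscreteWithin (sphere c |R|)] v) :
    Real.circleAverage u c R ≤ Real.circleAverage v c R := by
  refine mul_le_mul_of_nonneg_left ?_ (by positivity)
  refine intervalIntegral.integral_mono_ae_restrict (by positivity) hu hv ?_
  apply ae_restrict_le_codiscreteWithin measurableSet_Icc
  exact codiscreteWithin_mono (by tauto) (circleMap_preimage_codiscrete hR huv)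

lemma log_norm_le_circleAverage_log_norm (hR : R ≠ 0)
    (hg : AnalyticOnNhd ℂ g (closedBall c |R|)) (hc : g c ≠ 0) :
    Real.log ‖g c‖ ≤ Real.circleAverage (Real.log ‖g ·‖) c R := by
  rw [hg.circleAverage_log_norm hR hc]
  refine le_add_of_nonneg_left (finsum_nonneg fun w => ?_)
  by_cases hw : w ∈ closedBall c |R|
  · refine mul_nonneg (mod_cast MeromorphicOn.AnalyticOnNhd.divisor_nonneg hg w) ?_
    rcases eq_or_ne w c with rfl | hwc
    · simp
    have hpos : 0 < ‖c - w‖ := norm_pos_iff.2 (sub_ne_zero.2 hwc.symm)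
    rw [← Real.log_abs, abs_mul, abs_inv, abs_norm, ← div_eq_mul_inv]
    exact Real.log_nonneg ((one_le_div hpos).2 (by simpa [dist_eq_norm'] using hw))
  · simp [hw]

lemma circleAverage_const_add_mul (hu : CircleIntegrable u c R) (b d : ℝ) :
    Real.circleAverage (fun z => b + d * u z) c R = b + d * Real.circleAverage u c R := by
  simp only [← smul_eq_mul]
  rw [Real.circleAverage_fun_add (circleIntegrable_const b c R) hu.const_fun_smul,
    Real.circleAverage_const, Real.circleAverage_fun_smul]

lemma rpow_add_mul_log_sub_log_le {x : ℝ} (ha : 0 < a) (hx : 0 < x) :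
    a ^ p + p * a ^ p * (Real.log x - Real.log a) ≤ x ^ p := by
  have hexp : x ^ p = a ^ p * Real.exp (p * (Real.log x - Real.log a)) := by
    rw [Real.rpow_def_of_pos hx, Real.rpow_def_of_pos ha, ← Real.exp_add]
    ring_nf
  calc a ^ p + p * a ^ p * (Real.log x - Real.log a)
      = a ^ p * (p * (Real.log x - Real.log a) + 1) := by ring
    _ ≤ x ^ p := by
        rw [hexp]
        gcongr
        exact Real.add_one_le_exp _

lemma norm_rpow_le_circleAverage_norm_rpow (hp : 0 < p) (hR : R ≠ 0)
    (hg : AnalyticOnNhd ℂ g (closedBall c |R|)) :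
    ‖g c‖ ^ p ≤ Real.circleAverage (fun z => ‖g z‖ ^ p) c R := by
  by_cases hc : g c = 0
  · rw [hc, norm_zero, Real.zero_rpow hp.ne']
    exact mul_nonneg (by positivity)
      (intervalIntegral.integral_nonneg (by positivity) fun θ _ => by positivity)
  have hgs := hg.mono (sphere_subset_closedBall (x := c) (ε := |R|))
  have hlog : CircleIntegrable (Real.log ‖g ·‖) c R :=
    hgs.meromorphicOn.circleIntegrable_log_norm
  have hconst : CircleIntegrable (fun _ => Real.log ‖g c‖) c R := circleIntegrable_const _ c R
  have hdiff : CircleIntegrable (fun z => Real.log ‖g z‖ - Real.log ‖g c‖) c R := hlog.sub hconst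
  have hpow : CircleIntegrable (fun z => ‖g z‖ ^ p) c R :=
    (hgs.continuousOn.norm.rpow_const fun _ _ => Or.inr hp.le).circleIntegrable'
  have hne : ∀ᶠ z in codiscreteWithin (sphere c |R|), g z ≠ 0 :=
    codiscreteWithin_mono sphere_subset_closedBall <|
      (hg.eqOn_zero_or_eventually_ne_zero_of_preconnected
        (convex_closedBall c |R|).isPreconnected).resolve_left
        fun h => hc (h (mem_closedBall_self (abs_nonneg R)))
  -- Average the tangent line inequality of `exp` at `p * log ‖g c‖`.
  let m := ‖g c‖ ^ p
  calc m
      ≤ m + p * m * (Real.circleAverage (Real.log ‖g ·‖) c R - Real.log ‖g c‖) :=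
        le_add_of_nonneg_right <| mul_nonneg (by positivity) <|
          sub_nonneg.2 (log_norm_le_circleAverage_log_norm hR hg hc)
    _ = Real.circleAverage (fun z => m + p * m * (Real.log ‖g z‖ - Real.log ‖g c‖)) c R := by
        rw [circleAverage_const_add_mul hdiff, Real.circleAverage_fun_sub hlog hconst,
          Real.circleAverage_const]
    _ ≤ Real.circleAverage (fun z => ‖g z‖ ^ p) c R := by
        refine circleAverage_mono_codiscreteWithin hR ?_ hpow ?_
        · exact (circleIntegrable_const m c R).add (hdiff.const_fun_smul (a := p * m))
        filter_upwards [hne] with z hz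
        exact rpow_add_mul_log_sub_log_le (norm_pos_iff.2 hc) (norm_pos_iff.2 hz)

lemma setLIntegral_ball_eq_lintegral_circleMap {h : ℂ → ℝ≥0∞} (hh : Measurable h) :
    ∫⁻ z in ball c R, h z =
      ∫⁻ r in Ioo 0 R, ENNReal.ofReal r * ∫⁻ θ in Ioo (-π) π, h (circleMap c r θ) := by
  have hpolar (r θ : ℝ) : c + Complex.polarCoord.symm (r, θ) = circleMap c r θ := by
    simp [circleMap, Complex.exp_mul_I]
  have hindicator {r : ℝ} (hr : 0 < r) (θ : ℝ) : (ball c R).indicator h (circleMap c r θ) =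
      (Iio R).indicator (fun r => h (circleMap c r θ)) r := by
    simp [indicator, dist_eq_norm, circleMap, abs_of_pos hr]
  rw [← lintegral_indicator measurableSet_ball,
    ← lintegral_add_left_eq_self ((ball c R).indicator h) c,
    ← Complex.lintegral_comp_polarCoord_symm, polarCoord_target, Measure.volume_eq_prod,
    ← Measure.prod_restrict, lintegral_prod]
  · simp only [smul_eq_mul, hpolar]
    rw [← Ioi_inter_Iio (a := 0), inter_comm (Ioi 0), ← setLIntegral_indicator measurableSet_Iio]
    refine setLIntegral_congr_fun measurableSet_Ioi fun r hr => ?_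
    simp only [hindicator hr, lintegral_const_mul' _ _ ENNReal.ofReal_ne_top]
    by_cases hrR : r < R <;> simp [hrR]
  · have := hh.indicator (measurableSet_ball (x := c) (ε := R))
    simp only [smul_eq_mul, Complex.polarCoord_symm_apply]
    exact Measurable.aemeasurable (by fun_prop)

lemma ofReal_two_pi_mul_circleAverage (hu : ContinuousOn u (sphere c |R|))
    (hu0 : ∀ z ∈ sphere c |R|, 0 ≤ u z) :
    ENNReal.ofReal (2 * π * Real.circleAverage u c R) =
      ∫⁻ θ in Ioo (-π) π, ENNReal.ofReal (u (circleMap c R θ)) := by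
  have hperiodic : Function.Periodic (fun θ => u (circleMap c R θ)) (2 * π) :=
    (periodic_circleMap c R).comp u
  have hcont : Continuous fun θ => u (circleMap c R θ) :=
    hu.comp_continuous (continuous_circleMap c R) (circleMap_mem_sphere' c R)
  have hshift := hperiodic.intervalIntegral_add_eq 0 (-π)
  rw [zero_add, show -π + 2 * π = π by ring,
    intervalIntegral.integral_of_le (a := -π) (by linarith [Real.pi_pos]),
    integral_Ioc_eq_integral_Ioo] at hshift
  rw [Real.circleAverage, smul_eq_mul, mul_inv_cancel_left₀ (by positivity), hshift,
    ofReal_integral_eq_lintegral_ofReal]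
  · exact (hcont.integrableOn_Icc (a := -π) (b := π)).mono_set Ioo_subset_Icc_self
  · exact ae_of_all _ fun θ => hu0 _ (circleMap_mem_sphere' c R θ)

lemma ofReal_mul_volume_ball_le_of_le_circleAverage (hu : ContinuousOn u (ball c R))
    (hu0 : ∀ z ∈ ball c R, 0 ≤ u z) (ha : ∀ r ∈ Ioo 0 R, a ≤ Real.circleAverage u c r) :
    ENNReal.ofReal a * volume (ball c R) ≤ ∫⁻ z in ball c R, ENNReal.ofReal (u z) := by
  classical
  set h : ℂ → ℝ≥0∞ := (ball c R).piecewise (fun z => ENNReal.ofReal (u z)) 0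
  have hh : Measurable h := ContinuousOn.measurable_piecewise
    (ENNReal.continuous_ofReal.comp_continuousOn hu) continuousOn_const measurableSet_ball
  have h_eq {z : ℂ} (hz : z ∈ ball c R) : h z = ENNReal.ofReal (u z) := piecewise_eq_of_mem _ _ _ hz
  rw [← setLIntegral_const, ← setLIntegral_congr_fun measurableSet_ball fun z hz => h_eq hz,
    setLIntegral_ball_eq_lintegral_circleMap measurable_const,
    setLIntegral_ball_eq_lintegral_circleMap hh]
  refine setLIntegral_mono' measurableSet_Ioo fun r hr => ?_
  have hsphere : sphere c |r| ⊆ ball c R := by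
    rw [abs_of_pos hr.1]
    exact sphere_subset_closedBall.trans (closedBall_subset_ball hr.2)
  gcongr _ * ?_
  calc ∫⁻ _ in Ioo (-π) π, ENNReal.ofReal a
      = ENNReal.ofReal (2 * π * a) := by
        rw [setLIntegral_const, Real.volume_Ioo, mul_comm,
          ← ENNReal.ofReal_mul (by linarith [Real.pi_pos])]
        ring_nf
    _ ≤ ENNReal.ofReal (2 * π * Real.circleAverage u c r) := by
        gcongr
        exact ha r hr
    _ = ∫⁻ θ in Ioo (-π) π, h (circleMap c r θ) := by
        rw [ofReal_two_pi_mul_circleAverage (hu.mono hsphere) fun z hz => hu0 z (hsphere hz)]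
        exact lintegral_congr fun θ => (h_eq (hsphere (circleMap_mem_sphere' c r θ))).symm

lemma ofReal_norm_rpow_mul_volume_ball_le (hp : 0 < p) (hg : DifferentiableOn ℂ g (ball c R)) :
    ENNReal.ofReal (‖g c‖ ^ p) * volume (ball c R) ≤
      ∫⁻ z in ball c R, ENNReal.ofReal (‖g z‖ ^ p) := by
  refine ofReal_mul_volume_ball_le_of_le_circleAverage
    (hg.continuousOn.norm.rpow_const fun _ _ => Or.inr hp.le) (fun z _ => by positivity)
    fun r hr => norm_rpow_le_circleAverage_norm_rpow hp hr.1.ne' ?_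
  rw [abs_of_pos hr.1]
  exact (hg.analyticOnNhd isOpen_ball).mono (closedBall_subset_ball hr.2)

end SubmeanValue

section WeightedBergman

variable {g : ℂ → ℂ} {p s x α : ℝ} {y z : ℂ}

lemma one_sub_norm_sq_mem_Icc_of_mem_ball (hz : ‖z‖ < 1) (hy : y ∈ ball z ((1 - ‖z‖) / 2)) :
    1 - ‖y‖ ^ 2 ∈ Icc ((1 - ‖z‖) / 2) (6 * ((1 - ‖z‖) / 2)) := by
  rw [mem_ball, dist_eq_norm] at hy
  have hdist := abs_le.1 (abs_norm_sub_norm_le y z)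
  constructor <;> nlinarith [norm_nonneg y, norm_nonneg z]

lemma min_one_six_rpow_mul_rpow_le (hs : 0 < s) (hx : x ∈ Icc s (6 * s)) :
    min 1 (6 ^ α) * s ^ α ≤ x ^ α := by
  rcases le_total 0 α with hα | hα
  · calc min 1 (6 ^ α) * s ^ α ≤ 1 * s ^ α := by gcongr; exact min_le_left _ _
      _ ≤ x ^ α := by rw [one_mul]; exact Real.rpow_le_rpow hs.le hx.1 hα
  · calc min 1 (6 ^ α) * s ^ α ≤ 6 ^ α * s ^ α := by gcongr; exact min_le_right _ _
      _ = (6 * s) ^ α := (Real.mul_rpow (by norm_num) hs.le).symm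
      _ ≤ x ^ α := Real.rpow_le_rpow_of_nonpos (hs.trans_le hx.1) hx.2 hα

lemma ofReal_norm_rpow_mul_rpow_mul_volume_ball_le (hp : 0 < p)
    (hg : DifferentiableOn ℂ g (ball 0 1)) (hz : ‖z‖ < 1) :
    ENNReal.ofReal (‖g z‖ ^ p * (min 1 (6 ^ α) * ((1 - ‖z‖) / 2) ^ α)) *
        volume (ball z ((1 - ‖z‖) / 2)) ≤
      ∫⁻ y in ball 0 1, ENNReal.ofReal (‖g y‖ ^ p * (1 - ‖y‖ ^ 2) ^ α) := by
  set s := (1 - ‖z‖) / 2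
  have hs : 0 < s := half_pos (sub_pos.2 hz)
  have hsub : ball z s ⊆ ball 0 1 := ball_subset_ball' (by
    rw [dist_zero_right]
    linarith [show s = (1 - ‖z‖) / 2 from rfl])
  rw [ENNReal.ofReal_mul' (by positivity), mul_right_comm]
  calc ENNReal.ofReal (‖g z‖ ^ p) * volume (ball z s) *
        ENNReal.ofReal (min 1 (6 ^ α) * s ^ α)
      ≤ (∫⁻ y in ball z s, ENNReal.ofReal (‖g y‖ ^ p)) *
          ENNReal.ofReal (min 1 (6 ^ α) * s ^ α) := by
        gcongr
        exact ofReal_norm_rpow_mul_volume_ball_le hp (hg.mono hsub)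
    _ = ∫⁻ y in ball z s, ENNReal.ofReal (‖g y‖ ^ p * (min 1 (6 ^ α) * s ^ α)) := by
        rw [← lintegral_mul_const' _ _ ENNReal.ofReal_ne_top]
        simp_rw [ENNReal.ofReal_mul' (show 0 ≤ min 1 (6 ^ α) * s ^ α by positivity)]
    _ ≤ ∫⁻ y in ball z s, ENNReal.ofReal (‖g y‖ ^ p * (1 - ‖y‖ ^ 2) ^ α) := by
        refine setLIntegral_mono' measurableSet_ball fun y hy => ?_
        gcongr
        exact min_one_six_rpow_mul_rpow_le hs (one_sub_norm_sq_mem_Icc_of_mem_ball hz hy)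
    _ ≤ ∫⁻ y in ball 0 1, ENNReal.ofReal (‖g y‖ ^ p * (1 - ‖y‖ ^ 2) ^ α) :=
        lintegral_mono_set hsub

lemma exists_norm_rpow_mul_one_sub_norm_rpow_le (hp : 0 < p)
    (hg : DifferentiableOn ℂ g (ball 0 1))
    (hint : ∫⁻ z in ball 0 1, ENNReal.ofReal (‖g z‖ ^ p * (1 - ‖z‖ ^ 2) ^ α) < ⊤) :
    ∃ C, ∀ z ∈ ball 0 1, ‖g z‖ ^ p * (1 - ‖z‖) ^ (α + 2) ≤ C := by
  set I := ∫⁻ z in ball 0 1, ENNReal.ofReal (‖g z‖ ^ p * (1 - ‖z‖ ^ 2) ^ α)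
  refine ⟨2 ^ (α + 2) * I.toReal / (π * min 1 (6 ^ α)), fun z hz => ?_⟩
  rw [mem_ball_zero_iff] at hz
  have hbound := ofReal_norm_rpow_mul_rpow_mul_volume_ball_le (α := α) hp hg hz
  obtain ⟨s, hs⟩ : ∃ s, s = (1 - ‖z‖) / 2 := ⟨_, rfl⟩
  have hs0 : 0 < s := by linarith
  have hvol : volume (ball z s) = ENNReal.ofReal (π * s ^ 2) := by
    rw [Complex.volume_ball, mul_comm, ENNReal.ofReal_mul Real.pi_pos.le,
      ENNReal.ofReal_pow hs0.le, ← NNReal.coe_real_pi, ENNReal.ofReal_coe_nnreal]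
  rw [← hs, hvol, ← ENNReal.ofReal_mul (by positivity),
    ENNReal.ofReal_le_iff_le_toReal hint.ne] at hbound
  rw [le_div_iff₀ (by positivity), show 1 - ‖z‖ = 2 * s by linarith,
    Real.mul_rpow zero_le_two hs0.le]
  calc ‖g z‖ ^ p * (2 ^ (α + 2) * s ^ (α + 2)) * (π * min 1 (6 ^ α))
      = 2 ^ (α + 2) * (‖g z‖ ^ p * (min 1 (6 ^ α) * s ^ α) * (π * s ^ 2)) := by
        rw [Real.rpow_add hs0, Real.rpow_two]
        ring
    _ ≤ 2 ^ (α + 2) * I.toReal := by gcongr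

end WeightedBergman

section Growth

variable {f g F : ℂ → ℂ} {p s t : ℝ} {n : ℕ}

/-- The Korenblum growth class `𝒜⁻ˢ` of functions on the unit disk that blow up at the boundary at
most like `(1 - ‖z‖)⁻ˢ`. Only the growth is recorded, holomorphy is assumed separately. -/
def MemGrowth (s : ℝ) (g : ℂ → ℂ) : Prop :=
  ∃ C, ∀ z ∈ ball (0 : ℂ) 1, ‖g z‖ ≤ C * (1 - ‖z‖) ^ (-s)

lemma MemGrowth.exists_nonneg (hg : MemGrowth s g) :
    ∃ C, 0 ≤ C ∧ ∀ z ∈ ball (0 : ℂ) 1, ‖g z‖ ≤ C * (1 - ‖z‖) ^ (-s) := by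
  obtain ⟨C, hC⟩ := hg
  exact ⟨C, (norm_nonneg _).trans (by simpa using hC 0 (by simp)), hC⟩

lemma MemGrowth.mono (hst : s ≤ t) (hg : MemGrowth s g) : MemGrowth t g := by
  obtain ⟨C, hC0, hC⟩ := hg.exists_nonneg
  refine ⟨C, fun z hz => (hC z hz).trans ?_⟩
  have hz1 : 0 < 1 - ‖z‖ := by simpa using hz
  gcongr ?_ * ?_
  exact Real.rpow_le_rpow_of_exponent_ge hz1 (by simp) (neg_le_neg hst)

lemma hasDerivAt_div_mul_one_sub_mul_rpow_neg {C r x : ℝ} (hs : s ≠ 0) (hx : x * r < 1) :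
    HasDerivAt (fun x => C / s * (1 - x * r) ^ (-s)) (C * (1 - x * r) ^ (-(s + 1)) * r) x := by
  have hlin : HasDerivAt (fun x => 1 - x * r) (-r) x := by
    simpa using ((hasDerivAt_id x).mul_const r).const_sub 1
  refine ((hlin.rpow_const (p := -s) (Or.inl (sub_pos.2 hx).ne')).const_mul (C / s)).congr_deriv ?_
  rw [show -s - 1 = -(s + 1) by ring]
  field_simp

/-- Integrate the bound on `deriv g` along the radius from `0` to `w`. -/
lemma MemGrowth.of_deriv (hs : 0 < s) (hg : DifferentiableOn ℂ g (ball 0 1))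
    (hg' : MemGrowth (s + 1) (deriv g)) : MemGrowth s g := by
  obtain ⟨C, hC0, hC⟩ := hg'.exists_nonneg
  refine ⟨‖g 0‖ + C / s, fun w hw => ?_⟩
  rw [mem_ball_zero_iff] at hw
  have hlt : ∀ x ∈ Icc (0 : ℝ) 1, x * ‖w‖ < 1 := fun x hx =>
    (mul_le_of_le_one_left (norm_nonneg w) hx.2).trans_lt hw
  have hnorm : ∀ x ∈ Icc (0 : ℝ) 1, ‖(x : ℂ) * w‖ = x * ‖w‖ := fun x hx => by
    rw [norm_mul, Complex.norm_real, Real.norm_of_nonneg hx.1]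
  have hmem : ∀ x ∈ Icc (0 : ℝ) 1, (x : ℂ) * w ∈ ball (0 : ℂ) 1 := fun x hx => by
    rw [mem_ball_zero_iff, hnorm x hx]
    exact hlt x hx
  have hray : ∀ x ∈ Icc (0 : ℝ) 1,
      HasDerivAt (fun x : ℝ => g (x * w)) (deriv g (x * w) * w) x := fun x hx =>
    (hg.differentiableAt (isOpen_ball.mem_nhds (hmem x hx))).hasDerivAt.comp x
      (by simpa using (hasDerivAt_id x).ofReal_comp.mul_const w)
  have hmajorant : ∀ x ∈ Icc (0 : ℝ) 1,
      HasDerivAt (fun x => ‖g 0‖ + C / s * (1 - x * ‖w‖) ^ (-s))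
        (C * (1 - x * ‖w‖) ^ (-(s + 1)) * ‖w‖) x := fun x hx =>
    (hasDerivAt_div_mul_one_sub_mul_rpow_neg hs.ne' (hlt x hx)).const_add _
  have hbound : ‖g w‖ ≤ ‖g 0‖ + C / s * (1 - ‖w‖) ^ (-s) := by
    simpa using image_norm_le_of_norm_deriv_right_le_deriv_boundary'
      (HasDerivAt.continuousOn hray)
      (fun x hx => (hray x (Ico_subset_Icc_self hx)).hasDerivWithinAt)
      (by simpa using div_nonneg hC0 hs.le)
      (HasDerivAt.continuousOn hmajorant)
      (fun x hx => (hmajorant x (Ico_subset_Icc_self hx)).hasDerivWithinAt)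
      (fun x hx => by
        have hx := Ico_subset_Icc_self hx
        rw [norm_mul, ← hnorm x hx]
        exact mul_le_mul_of_nonneg_right (hC _ (hmem x hx)) (norm_nonneg w))
      (right_mem_Icc.2 zero_le_one)
  have hone : 1 ≤ (1 - ‖w‖) ^ (-s) := Real.one_le_rpow_of_pos_of_le_one_of_nonpos
    (sub_pos.2 hw) (by simp) (neg_nonpos.2 hs.le)
  calc ‖g w‖ ≤ ‖g 0‖ + C / s * (1 - ‖w‖) ^ (-s) := hbound
    _ ≤ (‖g 0‖ + C / s) * (1 - ‖w‖) ^ (-s) := by nlinarith [norm_nonneg (g 0)]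

lemma differentiableOn_iteratedDeriv {U : Set ℂ} (hU : IsOpen U) (hF : DifferentiableOn ℂ F U)
    (k : ℕ) : DifferentiableOn ℂ (iteratedDeriv k F) U := by
  rw [iteratedDeriv_eq_iterate]
  exact ((hF.analyticOnNhd hU).iterated_deriv k).differentiableOn

lemma MemGrowth.iteratedDeriv_of_le (hF : DifferentiableOn ℂ F (ball 0 1)) (hs : 0 < s)
    (hgrowth : MemGrowth (n + s) (iteratedDeriv (n + 1) F)) {k : ℕ} (hk : k ≤ n) :
    MemGrowth (k + s) (iteratedDeriv (k + 1) F) := by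
  induction hk using Nat.decreasingInduction with
  | self => exact hgrowth
  | of_succ k _ ih =>
    refine MemGrowth.of_deriv (by positivity) (differentiableOn_iteratedDeriv isOpen_ball hF _) ?_
    rw [← iteratedDeriv_succ]
    convert ih using 1
    push_cast
    ring

lemma MemBesov.congr (hf : MemBesov p n f) (hfg : EqOn f g (ball 0 1)) : MemBesov p n g := by
  rw [MemBesov, ← setLIntegral_congr_fun measurableSet_ball fun z hz => ?_]
  · exact hf
  · simp only [(hfg.eventuallyEq_of_mem (isOpen_ball.mem_nhds hz)).iteratedDeriv_eq n]

lemma MemBesov.memGrowth_iteratedDeriv (hp : 0 < p) (hf : DifferentiableOn ℂ f (ball 0 1))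
    (hfB : MemBesov p n f) : MemGrowth n (iteratedDeriv n f) := by
  obtain ⟨C, hC⟩ := exists_norm_rpow_mul_one_sub_norm_rpow_le hp
    (differentiableOn_iteratedDeriv isOpen_ball hf n) hfB
  refine ⟨C ^ p⁻¹, fun z hz => ?_⟩
  have hz1 : 0 < 1 - ‖z‖ := by simpa using hz
  have hpow := hC z hz
  rw [sub_add_cancel, Real.rpow_mul hz1.le, ← Real.mul_rpow (by positivity) (by positivity)] at hpow
  rw [Real.rpow_neg hz1.le, ← div_eq_mul_inv, le_div_iff₀ (by positivity)]
  exact (Real.le_rpow_inv_iff_of_pos (by positivity)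
    (le_trans (by positivity) hpow) hp).2 hpow

end Growth

open scoped ComplexConjugate

section Reflection

variable {g : ℂ → ℂ} {z : ℂ} {s : ℝ} {k : ℕ}

/-- The reflection `z ↦ 1 / z̄` in the unit circle, which the Dynkin construction uses to carry data
from the disk to its exterior. At `0` it takes the junk value `0`. -/
def circleReflection (z : ℂ) : ℂ := (conj z)⁻¹

lemma circleReflection_circleReflection (z : ℂ) : circleReflection (circleReflection z) = z := by
  simp [circleReflection]

lemma norm_circleReflection (z : ℂ) : ‖circleReflection z‖ = ‖z‖⁻¹ := by
  simp [circleReflection]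

lemma circleReflection_mem_ball (hz : 1 < ‖z‖) : circleReflection z ∈ ball (0 : ℂ) 1 := by
  rw [mem_ball_zero_iff, norm_circleReflection]
  exact inv_lt_one_of_one_lt₀ hz

lemma circleReflection_ofReal_mul_exp (r θ : ℝ) :
    circleReflection (r * Complex.exp (θ * I)) = (r⁻¹ : ℝ) * Complex.exp (θ * I) := by
  simp [circleReflection, ← Complex.exp_conj, ← Complex.exp_neg, mul_comm]

lemma image_circleReflection : circleReflection '' {z | 1 < ‖z‖} = ball 0 1 \ {0} := by
  ext w
  constructor
  · rintro ⟨z, hz, rfl⟩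
    have hz : 1 < ‖z‖ := hz
    refine ⟨circleReflection_mem_ball hz, ?_⟩
    simpa [circleReflection] using norm_pos_iff.1 (one_pos.trans hz)
  · rintro ⟨hw, hw0⟩
    refine ⟨circleReflection w, ?_, circleReflection_circleReflection w⟩
    change 1 < ‖circleReflection w‖
    rw [norm_circleReflection]
    exact (one_lt_inv₀ (norm_pos_iff.2 hw0)).2 (by simpa using hw)

lemma norm_sub_circleReflection (hz : 1 ≤ ‖z‖) : ‖z - circleReflection z‖ = ‖z‖ - ‖z‖⁻¹ := by
  have hz0 : ‖z‖ ≠ 0 := (one_pos.trans_le hz).ne'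
  have hfactor : z - circleReflection z = ((1 - (‖z‖ ^ 2)⁻¹ : ℝ) : ℂ) * z := by
    rw [circleReflection, Complex.inv_def, Complex.conj_conj, Complex.normSq_conj,
      Complex.normSq_eq_norm_sq]
    push_cast
    ring
  have hnonneg : 0 ≤ 1 - (‖z‖ ^ 2)⁻¹ := sub_nonneg.2 (inv_le_one_of_one_le₀ (one_le_pow₀ hz))
  rw [hfactor, norm_mul, Complex.norm_real, Real.norm_of_nonneg hnonneg]
  field_simp

lemma hasFDerivAt_circleReflection (hz : z ≠ 0) :
    HasFDerivAt circleReflection (-(conj z ^ 2)⁻¹ • (conjCLE : ℂ →L[ℝ] ℂ)) z :=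
  (hasDerivAt_inv ((map_ne_zero _).2 hz)).comp_hasFDerivAt_of_eq z conjCLE.hasFDerivAt rfl

lemma contDiffAt_circleReflection (hz : z ≠ 0) : ContDiffAt ℝ 1 circleReflection z :=
  conjCLE.contDiff.contDiffAt.inv ((map_ne_zero (starRingEnd ℂ)).2 hz)

lemma abs_det_smul_conjCLE (b : ℂ) : |(b • (conjCLE : ℂ →L[ℝ] ℂ)).det| = ‖b‖ ^ 2 := by
  have hcomp : ((b • (conjCLE : ℂ →L[ℝ] ℂ) : ℂ →L[ℝ] ℂ) : ℂ →ₗ[ℝ] ℂ) =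
      Algebra.lmul ℝ ℂ b ∘ₗ conjAe.toLinearMap := by
    ext
    simp
  rw [ContinuousLinearMap.det, hcomp, LinearMap.det_comp, det_conjAe, ← Algebra.norm_apply,
    Algebra.norm_complex_apply, Complex.normSq_eq_norm_sq, mul_neg_one, abs_neg, abs_sq]

lemma setLIntegral_comp_circleReflection (h : ℂ → ℝ≥0∞) :
    ∫⁻ z in {z | 1 < ‖z‖}, ENNReal.ofReal (‖z‖ ^ 4)⁻¹ * h (circleReflection z) =
      ∫⁻ z in ball 0 1, h z := by
  have hmeas : MeasurableSet {z : ℂ | 1 < ‖z‖} :=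
    (isOpen_lt continuous_const continuous_norm).measurableSet
  have hderiv : ∀ z ∈ {z : ℂ | 1 < ‖z‖}, HasFDerivWithinAt circleReflection
      (-(conj z ^ 2)⁻¹ • (conjCLE : ℂ →L[ℝ] ℂ)) {z | 1 < ‖z‖} z := fun z hz =>
    (hasFDerivAt_circleReflection (norm_pos_iff.1 (one_pos.trans hz))).hasFDerivWithinAt
  have hinj : InjOn circleReflection {z : ℂ | 1 < ‖z‖} :=
    (Function.LeftInverse.injective circleReflection_circleReflection).injOn
  rw [← setLIntegral_congr (sdiff_null_ae_eq_self (s := ball 0 1) (measure_singleton (0 : ℂ))),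
    ← image_circleReflection, lintegral_image_eq_lintegral_abs_det_fderiv_mul volume hmeas hderiv
      hinj]
  refine lintegral_congr fun z => ?_
  rw [abs_det_smul_conjCLE, norm_neg, norm_inv, norm_pow, RCLike.norm_conj, inv_pow, ← pow_mul]

lemma tendsto_circleReflection_cobounded :
    Tendsto circleReflection (Bornology.cobounded ℂ) (𝓝 0) := by
  rw [tendsto_zero_iff_norm_tendsto_zero]
  simpa only [norm_circleReflection, Function.comp_def] using
    tendsto_inv_atTop_zero.comp (tendsto_norm_cobounded_atTop (E := ℂ))

lemma isBigO_sub_circleReflection :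
    (fun z => z - circleReflection z) =O[Bornology.cobounded ℂ] id :=
  (Asymptotics.isBigO_refl _ _).sub <|
    (tendsto_circleReflection_cobounded.isBigO_one ℂ).trans
      (Asymptotics.isLittleO_const_id_cobounded (1 : ℂ)).isBigO

/-- As `z` tends to the circle, `1 - ‖z*‖` and `‖z - z*‖` are comparable. -/
lemma tendsto_comp_circleReflection_mul_sub_pow (hg : MemGrowth s g) (hk : s < k) :
    Tendsto (fun z => g (circleReflection z) * (z - circleReflection z) ^ k)
      (comap norm (𝓝[>] 1)) (𝓝 0) := by
  obtain ⟨C, hC⟩ := hg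
  have hlim : Tendsto (fun r : ℝ => C * ((1 - r⁻¹) ^ (k - s) * (1 + r) ^ k)) (𝓝[>] 1) (𝓝 0) := by
    have hcont : ContinuousAt (fun r : ℝ => C * ((1 - r⁻¹) ^ (k - s) * (1 + r) ^ k)) 1 := by
      refine continuousAt_const.mul (ContinuousAt.mul ?_ (by fun_prop))
      exact (continuousAt_const.sub (continuousAt_inv₀ one_ne_zero)).rpow_const
        (Or.inr (sub_nonneg.2 hk.le))
    simpa [Real.zero_rpow (sub_pos.2 hk).ne'] using
      hcont.tendsto.mono_left (nhdsWithin_le_nhds (s := Ioi 1))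
  refine squeeze_zero_norm' ?_ (hlim.comp tendsto_comap)
  filter_upwards [preimage_mem_comap self_mem_nhdsWithin] with z hz
  have hz : 1 < ‖z‖ := hz
  have hpos : 0 < 1 - ‖z‖⁻¹ := sub_pos.2 (inv_lt_one_of_one_lt₀ hz)
  have hfactor : ‖z‖ - ‖z‖⁻¹ = (1 - ‖z‖⁻¹) * (1 + ‖z‖) := by field_simp; ring
  have hgz := hC _ (circleReflection_mem_ball hz)
  rw [norm_circleReflection] at hgz
  calc ‖g (circleReflection z) * (z - circleReflection z) ^ k‖
      ≤ C * (1 - ‖z‖⁻¹) ^ (-s) * ((1 - ‖z‖⁻¹) * (1 + ‖z‖)) ^ k := by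
        rw [norm_mul, norm_pow, norm_sub_circleReflection hz.le, hfactor]
        gcongr
    _ = C * ((1 - ‖z‖⁻¹) ^ (k - s) * (1 + ‖z‖) ^ k) := by
        rw [sub_eq_neg_add (k : ℝ), Real.rpow_add_natCast hpos.ne', mul_pow]
        ring

end Reflection

section BigOPow

variable {g : ℂ → ℂ} {m : ℕ}

lemma bigOPow_iff_isBigO : BigOPow g m ↔ g =O[Bornology.cobounded ℂ] (fun z => z ^ m) := by
  simp only [Asymptotics.isBigO_iff', hasBasis_cobounded_norm.eventually_iff, true_and, norm_pow]
  constructor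
  · rintro ⟨C, R, hC, -, h⟩
    exact ⟨C, hC, R, fun z hz => h z hz⟩
  · rintro ⟨C, hC, R, h⟩
    exact ⟨C, max R 1, hC, by positivity, fun z hz => h ((le_max_left R 1).trans hz)⟩

end BigOPow

section Dbar

variable {f τ : ℂ → ℂ} {τ' : ℂ →L[ℝ] ℂ} {a b z : ℂ}

lemma dbar_eq_mul_of_hasFDerivAt (hτ : HasFDerivAt τ τ' z)
    (hf : HasFDerivAt f (a • ContinuousLinearMap.id ℝ ℂ + b • τ') z) :
    dbar f z = b * dbar τ z := by
  rw [dbar, dbar, hf.fderiv, hτ.fderiv]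
  simp only [add_apply, smul_apply, ContinuousLinearMap.id_apply, smul_eq_mul]
  linear_combination (a / 2) * I_mul_I

lemma dbar_circleReflection (hz : z ≠ 0) : dbar circleReflection z = -(conj z ^ 2)⁻¹ := by
  rw [dbar, (hasFDerivAt_circleReflection hz).fderiv]
  simp only [smul_apply, ContinuousLinearEquiv.coe_coe, conjCLE_apply, map_one, conj_I,
    smul_eq_mul]
  linear_combination ((conj z ^ 2)⁻¹ / 2) * I_mul_I

end Dbar

section TaylorSum

variable {F τ : ℂ → ℂ} {τ' : ℂ →L[ℝ] ℂ} {U : Set ℂ} {z : ℂ}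

/-- The Taylor polynomial of degree `n` of `F` at the point `ζ`, evaluated at `z`. -/
def taylorSum (F : ℂ → ℂ) (n : ℕ) (ζ z : ℂ) : ℂ :=
  ∑ k ∈ Finset.range (n + 1), iteratedDeriv k F ζ * ((z - ζ) ^ k / k.factorial)

/-- The terms from differentiating the base point telescope: only the top order one survives. -/
lemma hasFDerivAt_taylorSum (hU : IsOpen U) (hF : DifferentiableOn ℂ F U)
    (hτ : HasFDerivAt τ τ' z) (hz : τ z ∈ U) (n : ℕ) :
    HasFDerivAt (fun w => taylorSum F n (τ w) w)
      ((∑ k ∈ Finset.range n, iteratedDeriv (k + 1) F (τ z) * ((z - τ z) ^ k / k.factorial)) •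
          ContinuousLinearMap.id ℝ ℂ +
        (iteratedDeriv (n + 1) F (τ z) * ((z - τ z) ^ n / n.factorial)) • τ') z := by
  have hcoeff (k : ℕ) : HasFDerivAt (fun w => iteratedDeriv k F (τ w))
      (iteratedDeriv (k + 1) F (τ z) • τ') z := by
    rw [iteratedDeriv_succ]
    exact ((differentiableOn_iteratedDeriv hU hF k).differentiableAt
      (hU.mem_nhds hz)).hasDerivAt.comp_hasFDerivAt z hτ
  induction n with
  | zero =>
    have hzero : (fun w => taylorSum F 0 (τ w) w) = fun w => iteratedDeriv 0 F (τ w) := by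
      simp [taylorSum]
    rw [hzero]
    refine (hcoeff 0).congr_fderiv (ContinuousLinearMap.ext fun v => ?_)
    simp
  | succ n ih =>
    have hpow : HasFDerivAt (fun w => (w - τ w) ^ (n + 1) / ((n + 1).factorial : ℂ))
        (((z - τ z) ^ n / n.factorial) • (ContinuousLinearMap.id ℝ ℂ - τ')) z := by
      have hpow_deriv := ((hasDerivAt_pow (n + 1) (z - τ z)).div_const
        ((n + 1).factorial : ℂ)).comp_hasFDerivAt z ((hasFDerivAt_id z).sub hτ)
      refine hpow_deriv.congr_fderiv (congrArg (· • _) ?_)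
      rw [Nat.factorial_succ, Nat.add_sub_cancel]
      push_cast
      field_simp
    have hsucc : (fun w => taylorSum F (n + 1) (τ w) w) = fun w => taylorSum F n (τ w) w +
        iteratedDeriv (n + 1) F (τ w) * ((w - τ w) ^ (n + 1) / (n + 1).factorial) :=
      funext fun w => Finset.sum_range_succ _ _
    rw [hsucc]
    refine (ih.add ((hcoeff (n + 1)).mul hpow)).congr_fderiv (ContinuousLinearMap.ext fun v => ?_)
    simp only [add_apply, sub_apply, smul_apply, ContinuousLinearMap.id_apply, smul_eq_mul,
      Finset.sum_range_succ]
    ring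

lemma dbar_taylorSum (hU : IsOpen U) (hF : DifferentiableOn ℂ F U)
    (hτ : DifferentiableAt ℝ τ z) (hz : τ z ∈ U) (n : ℕ) :
    dbar (fun w => taylorSum F n (τ w) w) z =
      iteratedDeriv (n + 1) F (τ z) * ((z - τ z) ^ n / n.factorial) * dbar τ z :=
  dbar_eq_mul_of_hasFDerivAt hτ.hasFDerivAt (hasFDerivAt_taylorSum hU hF hτ.hasFDerivAt hz n)

lemma contDiffAt_taylorSum (hU : IsOpen U) (hF : DifferentiableOn ℂ F U)
    (hτ : ContDiffAt ℝ 1 τ z) (hz : τ z ∈ U) (n : ℕ) :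
    ContDiffAt ℝ 1 (fun w => taylorSum F n (τ w) w) z := by
  refine ContDiffAt.sum fun k _ => ContDiffAt.mul ?_ (((contDiffAt_id.sub hτ).pow k).div_const _)
  exact ((((differentiableOn_iteratedDeriv hU hF k).contDiffOn hU).contDiffAt
    (hU.mem_nhds hz)).restrict_scalars ℝ).comp z hτ

end TaylorSum

section DynkinExtension

variable {F : ℂ → ℂ} {Fb : ℝ → ℂ} {n : ℕ} {z : ℂ}

/-- The Dynkin pseudoanalytic extension of order `n` of a function `F` on the unit disk: its value
at an exterior point `z` is that of the Taylor polynomial of `F` at the reflected point. -/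
def dynkinExtension (F : ℂ → ℂ) (n : ℕ) (z : ℂ) : ℂ :=
  taylorSum F n (circleReflection z) z

lemma contDiffOn_dynkinExtension (hF : DifferentiableOn ℂ F (ball 0 1)) (n : ℕ) :
    ContDiffOn ℝ 1 (dynkinExtension F n) {z | 1 < ‖z‖} := fun _ hz =>
  (contDiffAt_taylorSum isOpen_ball hF
    (contDiffAt_circleReflection (norm_pos_iff.1 (one_pos.trans hz)))
    (circleReflection_mem_ball hz) n).contDiffWithinAt

lemma dbar_dynkinExtension (hF : DifferentiableOn ℂ F (ball 0 1)) (n : ℕ) (hz : 1 < ‖z‖) :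
    dbar (dynkinExtension F n) z = iteratedDeriv (n + 1) F (circleReflection z) *
      ((z - circleReflection z) ^ n / n.factorial) * -(conj z ^ 2)⁻¹ := by
  have hz0 : z ≠ 0 := norm_pos_iff.1 (one_pos.trans hz)
  rw [← dbar_circleReflection hz0]
  exact dbar_taylorSum isOpen_ball hF (hasFDerivAt_circleReflection hz0).differentiableAt
    (circleReflection_mem_ball hz) n

lemma norm_dbar_dynkinExtension_le (hF : DifferentiableOn ℂ F (ball 0 1)) (n : ℕ)
    (hz : 1 < ‖z‖) : ‖dbar (dynkinExtension F n) z‖ ≤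
      ‖iteratedDeriv (n + 1) F (circleReflection z)‖ * ((‖z‖ - ‖z‖⁻¹) ^ n / ‖z‖ ^ 2) := by
  have hfactorial : (1 : ℝ) ≤ n.factorial := mod_cast n.factorial_pos
  rw [dbar_dynkinExtension hF n hz, norm_mul, norm_mul, norm_div, norm_pow,
    norm_sub_circleReflection hz.le, norm_neg, norm_inv, norm_pow, RCLike.norm_conj,
    norm_natCast, mul_assoc, ← div_eq_mul_inv]
  have hnonneg : 0 ≤ ‖z‖ - ‖z‖⁻¹ := norm_sub_circleReflection hz.le ▸ norm_nonneg _
  gcongr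
  exact div_le_self (by positivity) hfactorial

lemma isBigO_iteratedDeriv_comp_circleReflection (hF : DifferentiableOn ℂ F (ball 0 1)) (k : ℕ) :
    (fun z => iteratedDeriv k F (circleReflection z)) =O[Bornology.cobounded ℂ]
      (fun _ => (1 : ℂ)) := by
  have hcont : ContinuousAt (iteratedDeriv k F) 0 :=
    (differentiableOn_iteratedDeriv isOpen_ball hF k).continuousOn.continuousAt
      (ball_mem_nhds 0 one_pos)
  exact (hcont.tendsto.comp tendsto_circleReflection_cobounded).isBigO_one ℂ

lemma bigOPow_dynkinExtension (hF : DifferentiableOn ℂ F (ball 0 1)) (n : ℕ) :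
    BigOPow (dynkinExtension F n) n := by
  rw [bigOPow_iff_isBigO]
  unfold dynkinExtension taylorSum
  refine Asymptotics.IsBigO.fun_sum fun k hk => ?_
  have hpow : (fun z => (z - circleReflection z) ^ k) =O[Bornology.cobounded ℂ] (· ^ n) :=
    (isBigO_sub_circleReflection.pow k).trans
      (Asymptotics.isBigO_pow_pow_cobounded_of_le (Finset.mem_range_succ_iff.1 hk))
  simpa [div_eq_inv_mul] using (isBigO_iteratedDeriv_comp_circleReflection hF k).mul
    (hpow.const_mul_left (k.factorial : ℂ)⁻¹)

lemma bigOPow_dbar_dynkinExtension (hF : DifferentiableOn ℂ F (ball 0 1)) (hn : 2 ≤ n) :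
    BigOPow (dbar (dynkinExtension F n)) (n - 2) := by
  rw [bigOPow_iff_isBigO]
  have hconj : (fun z => -(conj z ^ 2)⁻¹) =O[Bornology.cobounded ℂ] fun z => (z ^ 2)⁻¹ :=
    Asymptotics.isBigO_of_le _ fun z => by simp
  refine ((((isBigO_iteratedDeriv_comp_circleReflection hF (n + 1)).mul
    ((isBigO_sub_circleReflection.pow n).const_mul_left (n.factorial : ℂ)⁻¹)).mul hconj).congr'
      ?_ ?_)
  · filter_upwards [(tendsto_norm_cobounded_atTop (E := ℂ)).eventually_gt_atTop 1] with z hz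
    rw [dbar_dynkinExtension hF n hz, div_eq_inv_mul]
  · filter_upwards [Bornology.eventually_ne_cobounded (0 : ℂ)] with z hz
    rw [one_mul, id, ← div_eq_mul_inv, pow_sub₀ z hz hn, div_eq_mul_inv]

lemma tendsto_dynkinExtension_sub_comp_circleReflection
    (hgrowth : ∀ k < n, ∃ s < ((k + 1 : ℕ) : ℝ), MemGrowth s (iteratedDeriv (k + 1) F)) :
    Tendsto (fun z => dynkinExtension F n z - F (circleReflection z))
      (comap norm (𝓝[>] 1)) (𝓝 0) := by
  have hsub (z : ℂ) : dynkinExtension F n z - F (circleReflection z) =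
      ∑ k ∈ Finset.range n, iteratedDeriv (k + 1) F (circleReflection z) *
        (z - circleReflection z) ^ (k + 1) / (k + 1).factorial := by
    simp [dynkinExtension, taylorSum, Finset.sum_range_succ', mul_div_assoc]
  simp only [hsub]
  rw [← Finset.sum_const_zero (s := Finset.range n)]
  refine tendsto_finsetSum _ fun k hk => ?_
  obtain ⟨s, hs, hmem⟩ := hgrowth k (Finset.mem_range.1 hk)
  simpa only [zero_div] using (tendsto_comp_circleReflection_mul_sub_pow hmem hs).div_const _

lemma tendsto_ofReal_mul_exp_comap_norm (θ : ℝ) :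
    Tendsto (fun r : ℝ => (r : ℂ) * Complex.exp (θ * I)) (𝓝[>] 1) (comap norm (𝓝[>] 1)) := by
  refine tendsto_comap_iff.2 (tendsto_id.congr' ?_)
  filter_upwards [self_mem_nhdsWithin] with r hr
  have hr0 : 0 < r := one_pos.trans hr
  simp [norm_exp_ofReal_mul_I, abs_of_pos hr0]

lemma tendsto_inv_nhdsGT_one : Tendsto (fun r : ℝ => r⁻¹) (𝓝[>] 1) (𝓝[<] 1) := by
  refine tendsto_nhdsWithin_iff.2 ⟨?_, ?_⟩
  · simpa using (continuousAt_inv₀ (one_ne_zero (α := ℝ))).tendsto.mono_left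
      (nhdsWithin_le_nhds (s := Ioi 1))
  · filter_upwards [self_mem_nhdsWithin] with r hr using inv_lt_one_of_one_lt₀ (mem_Ioi.1 hr)

lemma radialLimitOut_dynkinExtension
    (hgrowth : ∀ k < n, ∃ s < ((k + 1 : ℕ) : ℝ), MemGrowth s (iteratedDeriv (k + 1) F))
    (hFb : RadialLimitIn F Fb) : RadialLimitOut (dynkinExtension F n) Fb := by
  filter_upwards [hFb] with θ hθ
  have hreflected := hθ.comp tendsto_inv_nhdsGT_one
  have hdiff := (tendsto_dynkinExtension_sub_comp_circleReflection hgrowth).comp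
    (tendsto_ofReal_mul_exp_comap_norm θ)
  simpa [Function.comp_def, circleReflection_ofReal_mul_exp] using hdiff.add hreflected

end DynkinExtension

section Weight

variable {F : ℂ → ℂ} {p x a : ℝ} {n : ℕ} {z : ℂ}

lemma rpow_mul_one_sub_inv_sq_le (hx : 1 ≤ x) (ha : 2 ≤ a) :
    x ^ a * (1 - x⁻¹ ^ 2) ≤ x ^ a - 1 := by
  have hpow : x ^ 2 ≤ x ^ a := by
    simpa using Real.rpow_le_rpow_of_exponent_le hx ha
  have hone : 1 ≤ x ^ a * x⁻¹ ^ 2 := by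
    rw [inv_pow, ← div_eq_mul_inv]
    exact (one_le_div (by positivity)).2 hpow
  linarith

lemma sub_inv_pow_div_sq_rpow_eq (hx : 1 < x) :
    ((x - x⁻¹) ^ n / x ^ 2) ^ p = (x ^ 4)⁻¹ * (1 - x⁻¹ ^ 2) ^ (n * p - 2) *
      (x ^ (n * p / 2 - p + 2) * (1 - x⁻¹ ^ 2)) ^ 2 := by
  have hx0 : 0 < x := one_pos.trans hx
  obtain ⟨u, hu⟩ : ∃ u, u = 1 - x⁻¹ ^ 2 := ⟨_, rfl⟩
  have hu0 : 0 < u := by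
    rw [hu, sub_pos]
    exact pow_lt_one₀ (by positivity) (inv_lt_one_of_one_lt₀ hx) two_ne_zero
  have hfactor : x - x⁻¹ = x * u := by rw [hu]; field_simp
  have hu_pow : u ^ (n * p - 2) * u ^ 2 = u ^ (n * p) := by
    rw [← Real.rpow_natCast u 2, ← Real.rpow_add hu0]
    simp
  have hx_pow : (x ^ 4)⁻¹ * (x ^ (n * p / 2 - p + 2)) ^ 2 = x ^ (n * p - 2 * p) := by
    rw [← Real.rpow_natCast x 4, ← Real.rpow_mul_natCast hx0.le, ← Real.rpow_neg hx0.le,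
      ← Real.rpow_add hx0]
    congr 1
    push_cast
    ring
  calc ((x - x⁻¹) ^ n / x ^ 2) ^ p = x ^ (n * p - 2 * p) * u ^ (n * p) := by
        rw [hfactor, mul_pow, Real.div_rpow (by positivity) (by positivity),
          Real.mul_rpow (by positivity) (by positivity), Real.rpow_sub hx0, Real.rpow_mul hx0.le,
          Real.rpow_mul hx0.le, Real.rpow_mul hu0.le]
        simp only [Real.rpow_natCast, Real.rpow_two]
        ring
    _ = _ := by
        rw [← hu_pow, ← hx_pow, ← hu]
        ring

lemma sub_inv_pow_div_sq_rpow_div_le (hx : 1 < x) (hp : 0 ≤ p) (hn : 2 ≤ n) :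
    ((x - x⁻¹) ^ n / x ^ 2) ^ p / (x ^ (n * p / 2 - p + 2) - 1) ^ 2 ≤
      (x ^ 4)⁻¹ * (1 - x⁻¹ ^ 2) ^ (n * p - 2) := by
  have hexponent : 2 ≤ n * p / 2 - p + 2 := by
    nlinarith [show (2 : ℝ) ≤ n from mod_cast hn]
  have hu0 : 0 < 1 - x⁻¹ ^ 2 := sub_pos.2 <|
    pow_lt_one₀ (by positivity) (inv_lt_one_of_one_lt₀ hx) two_ne_zero
  have hweight := rpow_mul_one_sub_inv_sq_le hx.le hexponent
  have hpos : 0 < x ^ (n * p / 2 - p + 2) * (1 - x⁻¹ ^ 2) := by positivity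
  rw [sub_inv_pow_div_sq_rpow_eq hx, div_le_iff₀ (pow_pos (hpos.trans_le hweight) 2)]
  gcongr

lemma norm_dbar_dynkinExtension_rpow_div_le (hp : 0 ≤ p) (hn : 2 ≤ n)
    (hF : DifferentiableOn ℂ F (ball 0 1)) (hz : 1 < ‖z‖) :
    ‖dbar (dynkinExtension F n) z‖ ^ p / (‖z‖ ^ (n * p / 2 - p + 2) - 1) ^ 2 ≤
      (‖z‖ ^ 4)⁻¹ * (‖iteratedDeriv (n + 1) F (circleReflection z)‖ ^ p *
        (1 - ‖circleReflection z‖ ^ 2) ^ (n * p - 2)) := by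
  have hnonneg : 0 ≤ ‖z‖ - ‖z‖⁻¹ := norm_sub_circleReflection hz.le ▸ norm_nonneg _
  set D := ‖iteratedDeriv (n + 1) F (circleReflection z)‖
  calc ‖dbar (dynkinExtension F n) z‖ ^ p / (‖z‖ ^ (n * p / 2 - p + 2) - 1) ^ 2
      ≤ (D * ((‖z‖ - ‖z‖⁻¹) ^ n / ‖z‖ ^ 2)) ^ p / (‖z‖ ^ (n * p / 2 - p + 2) - 1) ^ 2 := by
        gcongr
        exact norm_dbar_dynkinExtension_le hF n hz
    _ = D ^ p * (((‖z‖ - ‖z‖⁻¹) ^ n / ‖z‖ ^ 2) ^ p /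
          (‖z‖ ^ (n * p / 2 - p + 2) - 1) ^ 2) := by
        rw [Real.mul_rpow (norm_nonneg _) (by positivity), mul_div_assoc]
    _ ≤ D ^ p * ((‖z‖ ^ 4)⁻¹ * (1 - ‖z‖⁻¹ ^ 2) ^ (n * p - 2)) := by
        gcongr
        exact sub_inv_pow_div_sq_rpow_div_le hz hp hn
    _ = _ := by
        rw [norm_circleReflection]
        ring

lemma setLIntegral_dbar_dynkinExtension_le (hp : 0 ≤ p) (hn : 2 ≤ n)
    (hF : DifferentiableOn ℂ F (ball 0 1)) :
    ∫⁻ z in {z | 1 < ‖z‖}, ENNReal.ofReal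
        (‖dbar (dynkinExtension F n) z‖ ^ p / (‖z‖ ^ (n * p / 2 - p + 2) - 1) ^ 2) ≤
      ∫⁻ z in ball 0 1, ENNReal.ofReal
        (‖iteratedDeriv (n + 1) F z‖ ^ p * (1 - ‖z‖ ^ 2) ^ (n * p - 2)) := by
  rw [← setLIntegral_comp_circleReflection]
  refine setLIntegral_mono' (isOpen_lt continuous_const continuous_norm).measurableSet
    fun z hz => ?_
  rw [← ENNReal.ofReal_mul (by positivity)]
  exact ENNReal.ofReal_le_ofReal (norm_dbar_dynkinExtension_rpow_div_le hp hn hF hz)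

end Weight

theorem besov_implies_pseudoanalytic_extension_general
    (p : ℝ) (hp : 0 < p)
    (n : ℕ) (hn : 2 ≤ n)
    (f F : ℂ → ℂ)
    (hfBp : MemBesov p n f)
    (hFprim : ∀ z ∈ ball (0 : ℂ) 1, HasDerivAt F (f z) z)
    (Fstar : ℝ → ℂ)
    (hFb : RadialLimitIn F Fstar) :
    ∃ Ftil : ℂ → ℂ,
      ContDiffOn ℝ 1 Ftil {z : ℂ | 1 < ‖z‖} ∧
      RadialLimitOut Ftil Fstar ∧
      BigOPow Ftil n ∧
      BigOPow (dbar Ftil) (n - 2) ∧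
      (∫⁻ z in {z : ℂ | 1 < ‖z‖},
        ENNReal.ofReal (‖dbar Ftil z‖ ^ p /
          (‖z‖ ^ ((n : ℝ) * p / 2 - p + 2) - 1) ^ 2)) < ⊤ := by
  have hF : DifferentiableOn ℂ F (ball 0 1) := fun z hz =>
    (hFprim z hz).differentiableAt.differentiableWithinAt
  have hB : MemBesov p n (deriv F) := hfBp.congr fun z hz => (hFprim z hz).deriv.symm
  have htop : MemGrowth n (iteratedDeriv (n + 1) F) := by
    rw [iteratedDeriv_succ']
    exact hB.memGrowth_iteratedDeriv hp (hF.deriv isOpen_ball)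
  have hgrowth : ∀ k < n, ∃ s < ((k + 1 : ℕ) : ℝ), MemGrowth s (iteratedDeriv (k + 1) F) :=
    fun k hk => ⟨k + 1 / 2, by push_cast; linarith,
      (htop.mono (by linarith)).iteratedDeriv_of_le hF one_half_pos hk.le⟩
  refine ⟨dynkinExtension F n, contDiffOn_dynkinExtension hF n,
    radialLimitOut_dynkinExtension hgrowth hFb, bigOPow_dynkinExtension hF n,
    bigOPow_dbar_dynkinExtension hF hn,
    (setLIntegral_dbar_dynkinExtension_le hp.le hn hF).trans_lt ?_⟩
  rw [iteratedDeriv_succ']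
  exact hB

/-- Theorem 3.1, (i) ⇒ (ii): a Besov function admits a pseudoanalytic extension
of its primitive. -/
theorem besov_implies_pseudoanalytic_extension
    (p : ℝ) (hp : 1 ≤ p)
    (n : ℕ) (hn : 2 ≤ n)
    (f F : ℂ → ℂ)
    (hf : DifferentiableOn ℂ f (ball (0 : ℂ) 1))
    (hfBp : MemBesov p n f)
    (hF0 : F 0 = 0)
    (hFprim : ∀ z ∈ ball (0 : ℂ) 1, HasDerivAt F (f z) z)
    (hFH2 : MemH2 F)
    (Fstar : ℝ → ℂ)
    (hFb : RadialLimitIn F Fstar) :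
    ∃ Ftil : ℂ → ℂ,
      ContDiffOn ℝ 1 Ftil {z : ℂ | 1 < ‖z‖} ∧
      RadialLimitOut Ftil Fstar ∧
      BigOPow Ftil n ∧
      BigOPow (dbar Ftil) (n - 2) ∧
      (∫⁻ z in {z : ℂ | 1 < ‖z‖},
        ENNReal.ofReal (‖dbar Ftil z‖ ^ p /
          (‖z‖ ^ ((n : ℝ) * p / 2 - p + 2) - 1) ^ 2)) < ⊤ :=
  besov_implies_pseudoanalytic_extension_general p (by linarith) n hn f F hfBp hFprim Fstar hFb

end
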